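/- Let F be a field, let n > k ≥ 1 with n + k odd, and let T be a linear map on M_{n×k}(F) such that det_{n,k}(T(X)) = det_{n,k}(X) for all n×k matrices X over F. Define the linear map S on M_{(n-1)×k}(F) by S = L^- ∘ T ∘ L^+. Then det_{(n-1),k}(S(Y)) = det_{(n-1),k}(Y) for all (n−1)×k matrices Y over F. -/

import Mathlib

open Classical in
noncomputable def cullisDet {F : Type*} [Field F] {n k : ℕ}
    (X : Matrix (Fin n) (Fin k) F) : F :=
  ∑ f : Fin k → Fin n, if StrictMono f then
    (-1 : F) ^ (∑ j : Fin k, ((f j : ℕ) - (j : ℕ))) * (X.submatrix f id).det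
  else 0


/-- `L⁻`: subtract the last row from the others and delete it. -/
def Lminus {F : Type*} [Field F] {n k : ℕ}
    (X : Matrix (Fin n) (Fin k) F) : Matrix (Fin (n - 1)) (Fin k) F :=
  fun i j => X ⟨i, by have := i.isLt; omega⟩ j - X ⟨n - 1, by have := i.isLt; omega⟩ j


/-- `L⁺`: append a zero row at the bottom. -/
def Lplus {F : Type*} [Field F] {n k : ℕ}
    (Y : Matrix (Fin (n - 1)) (Fin k) F) : Matrix (Fin n) (Fin k) F :=
  fun i j => if h : (i : ℕ) < n - 1 then Y ⟨i, h⟩ j else 0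

open Classical in
theorem cullisDet_eq_filter {F : Type*} [Field F] {n k : ℕ} (X : Matrix (Fin n) (Fin k) F) :
    cullisDet X = ∑ f ∈ Finset.univ.filter (fun f : Fin k → Fin n => StrictMono f),
      (-1 : F) ^ (∑ j : Fin k, ((f j : ℕ) - (j : ℕ))) * (X.submatrix f id).det := by
  rw [cullisDet, Finset.sum_filter]

theorem strictMono_fin_le {n k : ℕ} {g : Fin k → Fin n} (hg : StrictMono g) : k ≤ n := by
  simpa using Fintype.card_le_of_injective g hg.injective

theorem strictMono_snoc {n k : ℕ} {g : Fin k → Fin n} (hg : StrictMono g) :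
    StrictMono (Fin.snoc (fun i => (g i).castSucc) (Fin.last n) : Fin (k+1) → Fin (n+1)) := by
  intro a b hab
  induction b using Fin.lastCases with
  | last =>
    induction a using Fin.lastCases with
    | last => exact absurd hab (lt_irrefl _)
    | cast a => simpa using Fin.castSucc_lt_last _
  | cast b =>
    induction a using Fin.lastCases with
    | last => exact absurd hab (not_lt.2 (Fin.le_last _))
    | cast a => simpa using hg (by simpa using hab)

open Classical in
theorem cullisDet_rec {F : Type*} [Field F] {n k : ℕ} (X : Matrix (Fin (n+1)) (Fin (k+1)) F) :
    cullisDet X = cullisDet (X.submatrix Fin.castSucc id) +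
      ∑ j : Fin (k+1), (-1 : F) ^ (n + (j : ℕ)) * X (Fin.last n) j *
        cullisDet (X.submatrix Fin.castSucc j.succAbove) := by
  rw [cullisDet_eq_filter X,
    ← Finset.sum_filter_add_sum_filter_not _ (fun f => f (Fin.last k) ≠ Fin.last n)]
  congr 1
  · rw [cullisDet_eq_filter]
    symm
    refine Finset.sum_nbij (fun g i => (g i).castSucc) ?_ ?_ ?_ ?_
    · intro g hg
      simp only [Finset.mem_filter, Finset.mem_univ, true_and] at hg ⊢
      exact ⟨fun a b hab => by simpa using hg hab, (Fin.castSucc_lt_last _).ne⟩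
    · intro g _ g' _ h
      funext i
      exact Fin.castSucc_injective _ (congrFun h i)
    · intro f hf
      simp only [Finset.coe_filter, Finset.mem_filter, Finset.mem_univ, true_and,
        Set.mem_setOf_eq] at hf
      obtain ⟨hf, hl⟩ := hf
      have hlt : ∀ i, f i ≠ Fin.last n := by
        intro i hi
        have := hf.monotone (Fin.le_last i)
        rw [hi] at this
        exact hl (le_antisymm (Fin.le_last _) this)
      refine ⟨fun i => (f i).castPred (hlt i), ?_, ?_⟩
      · simp only [Finset.coe_filter, Finset.mem_univ, true_and, Set.mem_setOf_eq]
        intro a b hab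
        simpa using hf hab
      · funext i
        simp
    · intro g _
      rfl
  · simp only [cullisDet_eq_filter, Finset.mul_sum]
    rw [Finset.sum_comm]
    symm
    refine Finset.sum_nbij
      (fun g => (Fin.snoc (fun i => (g i).castSucc) (Fin.last n) : Fin (k+1) → Fin (n+1)))
      ?_ ?_ ?_ ?_
    · intro g hg
      simp only [Finset.mem_filter, Finset.mem_univ, true_and] at hg ⊢
      exact ⟨strictMono_snoc hg, by simp⟩
    · intro g _ g' _ h
      funext i
      have := congrFun h i.castSucc
      simpa using this
    · intro f hf
      simp only [Finset.coe_filter, Finset.mem_filter, Finset.mem_univ, true_and,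
        Set.mem_setOf_eq, not_not] at hf
      obtain ⟨hf, hl⟩ := hf
      have hlt : ∀ i : Fin k, f i.castSucc ≠ Fin.last n := by
        intro i
        rw [← hl]
        exact (hf (Fin.castSucc_lt_last i)).ne
      refine ⟨fun i => (f i.castSucc).castPred (hlt i), ?_, ?_⟩
      · simp only [Finset.coe_filter, Finset.mem_univ, true_and, Set.mem_setOf_eq]
        intro a b hab
        simpa using hf (Fin.castSucc_lt_castSucc_iff.2 hab)
      · funext i
        induction i using Fin.lastCases with
        | last => simp [hl]
        | cast i => simp
    · intro g hg
      simp only [Finset.mem_filter, Finset.mem_univ, true_and] at hg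
      have hkn := strictMono_fin_le hg
      obtain ⟨d, rfl⟩ := Nat.exists_eq_add_of_le hkn
      rw [Matrix.det_succ_row _ (Fin.last k), Finset.mul_sum]
      refine Finset.sum_congr rfl fun j _ => ?_
      rw [Fin.sum_univ_castSucc]
      have hsub : ((X.submatrix (Fin.snoc (fun i => (g i).castSucc) (Fin.last (k+d)) :
          Fin (k+1) → Fin (k+d+1)) id).submatrix (Fin.last k).succAbove j.succAbove)
          = (X.submatrix Fin.castSucc j.succAbove).submatrix g id := by
        ext a b
        simp
      rw [hsub]
      simp only [Matrix.submatrix_apply, Fin.snoc_castSucc, Fin.snoc_last, Fin.val_castSucc,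
        Fin.val_last, id, Nat.add_sub_cancel_left]
      have h2 : ((-1 : F) ^ k) * (-1) ^ k = 1 := by rw [← mul_pow]; simp
      simp only [pow_add]
      ring

theorem cullisDet_zero_rows {F : Type*} [Field F] {k : ℕ} (X : Matrix (Fin 0) (Fin (k+1)) F) :
    cullisDet X = 0 := by
  rw [cullisDet]
  refine Finset.sum_eq_zero fun f _ => (f 0).elim0

theorem cullisDet_zero_cols {F : Type*} [Field F] {n : ℕ} (X : Matrix (Fin n) (Fin 0) F) :
    cullisDet X = 1 := by
  have : ∀ f : Fin 0 → Fin n, StrictMono f := fun f a => a.elim0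
  simp [cullisDet, this]

theorem cullisDet_ones_last {F : Type*} [Field F] {n : ℕ} : ∀ {k : ℕ}
    (X : Matrix (Fin n) (Fin (k+1)) F), (∀ i, X i (Fin.last k) = 1) →
    cullisDet X = if Odd (n + k) then cullisDet (X.submatrix id Fin.castSucc) else 0 := by
  induction n with
  | zero =>
    intro k X _
    cases k with
    | zero => simp [cullisDet_zero_rows]
    | succ k => simp [cullisDet_zero_rows]
  | succ n ih =>
    intro k X hX
    rw [cullisDet_rec X, Fin.sum_univ_castSucc, ih (X.submatrix Fin.castSucc id)
      (fun i => by simpa using hX _)]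
    cases k with
    | zero =>
      have := hX (Fin.last n)
      simp only [cullisDet_zero_cols, this]
      rcases Nat.even_or_odd n with h | h
      · have h1 : ¬ Odd n := by simpa using h
        have h2 : Odd (n+1) := h.add_one
        simp_all
      · have h2 : ¬ Odd (n+1) := by simpa using h.add_one
        simp_all
    | succ k =>
      have key : ∀ j : Fin (k+1),
          cullisDet (X.submatrix Fin.castSucc (j.castSucc).succAbove) =
          if Odd (n + k) then cullisDet
            ((X.submatrix id Fin.castSucc).submatrix Fin.castSucc j.succAbove) else 0 := by
        intro j
        rw [ih]
        · congr 2
          ext a b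
          simp
        · intro i
          have : (j.castSucc).succAbove (Fin.last k) = Fin.last (k+1) := by
            simp
          simp [this, hX]
      have hl : cullisDet (X.submatrix Fin.castSucc (Fin.last (k+1)).succAbove) =
          cullisDet ((X.submatrix Fin.castSucc id).submatrix id Fin.castSucc) := by
        congr 1
        ext a b
        simp
      simp only [key, hl, hX]
      rcases Nat.even_or_odd (n + k) with h | h
      · have h1 : ¬ Odd (n + k) := by simpa using h
        have h2 : Odd (n + (k+1)) := h.add_one
        have h3 : ¬ Odd (n + 1 + (k+1)) := by
          rw [Nat.not_odd_iff_even, show n + 1 + (k+1) = n + (k+1) + 1 by omega]; exact h2.add_one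
        simp [h1, h2, h3, h2.neg_one_pow]
      · have h2' : Even (n + (k+1)) := h.add_one
        have h2 : ¬ Odd (n + (k+1)) := by simpa using h2'
        have h3 : Odd (n + 1 + (k+1)) := by
          rw [show n + 1 + (k+1) = n + (k+1) + 1 by omega]; exact h2'.add_one
        rw [if_neg h2, if_pos h3, cullisDet_rec (X.submatrix id Fin.castSucc)]
        simp only [if_pos h, Fin.val_last, Fin.val_castSucc, h2'.neg_one_pow, zero_add, one_mul]
        rw [add_comm]
        rfl

theorem cullisDet_perm {F : Type*} [Field F] {n k : ℕ} (σ : Equiv.Perm (Fin k))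
    (X : Matrix (Fin n) (Fin k) F) :
    cullisDet (X.submatrix id σ) = (Equiv.Perm.sign σ : F) * cullisDet X := by
  simp only [cullisDet, Finset.mul_sum]
  refine Finset.sum_congr rfl fun f _ => ?_
  split_ifs
  · have := Matrix.det_permute' σ (X.submatrix f id)
    simp only [Matrix.submatrix_submatrix, Function.comp_id, Function.id_comp] at this ⊢
    rw [this]
    ring
  · simp

theorem cullisDet_ones {F : Type*} [Field F] {n k : ℕ} (hodd : Odd (n + k))
    (X : Matrix (Fin n) (Fin k) F) (p : Fin k) (hX : ∀ i, X i p = 1) : cullisDet X = 0 := by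
  cases k with
  | zero => exact p.elim0
  | succ k =>
    have h := cullisDet_ones_last (X.submatrix id (Equiv.swap p (Fin.last k)))
      (fun i => by simp [hX])
    have h1 : ¬ Odd (n + k) := by
      intro h'
      have : Even (n + (k+1)) := h'.add_one
      exact (Nat.not_odd_iff_even.2 this) hodd
    rw [if_neg h1, cullisDet_perm] at h
    rcases mul_eq_zero.1 h with h | h
    · rcases Int.units_eq_one_or (Equiv.Perm.sign (Equiv.swap p (Fin.last k))) with h' | h' <;>
        simp [h'] at h
    · exact h

theorem cullisDet_updateCol {F : Type*} [Field F] {n k : ℕ} 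
    (X : Matrix (Fin n) (Fin k) F) (p : Fin k) (u w : Fin n → F) (c : F) :
    cullisDet (X.updateCol p (u + c • w)) =
      cullisDet (X.updateCol p u) + c * cullisDet (X.updateCol p w) := by
  have hs : ∀ (f : Fin k → Fin n) (v : Fin n → F),
      (X.updateCol p v).submatrix f id = (X.submatrix f id).updateCol p (v ∘ f) := by
    intro f v
    ext a b
    simp [Matrix.updateCol_apply]
  simp only [cullisDet, Finset.mul_sum, ← Finset.sum_add_distrib, hs]
  refine Finset.sum_congr rfl fun f _ => ?_
  split_ifs
  · have : (u + c • w) ∘ f = u ∘ f + c • (w ∘ f) := rfl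
    rw [this, Matrix.det_updateCol_add, Matrix.det_updateCol_smul]
    ring
  · simp

theorem cullisDet_shift {F : Type*} [Field F] {n k : ℕ} (hodd : Odd (n + k))
    (X : Matrix (Fin n) (Fin k) F) (v : Fin k → F) (s : Finset (Fin k)) :
    cullisDet (Matrix.of fun i j => X i j + if j ∈ s then v j else 0) = cullisDet X := by
  induction s using Finset.induction_on with
  | empty => congr 1; ext; simp
  | insert p s hp ih =>
    rw [← ih]
    set Z : Matrix (Fin n) (Fin k) F := Matrix.of fun i j => X i j + if j ∈ s then v j else 0
      with hZ
    have h1 : (Matrix.of fun i j => X i j + if j ∈ insert p s then v j else 0)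
        = Z.updateCol p ((fun i => Z i p) + v p • (fun _ => (1 : F))) := by
      ext i j
      by_cases hj : j = p
      · subst hj
        simp [hZ, hp]
      · simp [hZ, Matrix.updateCol_apply, hj]
    have h2 : Z.updateCol p (fun i => Z i p) = Z := by
      ext i j
      by_cases hj : j = p
      · subst hj; simp
      · simp [Matrix.updateCol_apply, hj]
    rw [h1, cullisDet_updateCol, h2, cullisDet_ones hodd (Z.updateCol p fun _ => 1) p (by simp)]
    simp

theorem cullisDet_last_zero {F : Type*} [Field F] {n k : ℕ}
    (X : Matrix (Fin (n+1)) (Fin (k+1)) F) (h : ∀ j, X (Fin.last n) j = 0) :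
    cullisDet X = cullisDet (X.submatrix Fin.castSucc id) := by
  rw [cullisDet_rec]
  simp [h]

theorem cullisDet_Lplus {F : Type*} [Field F] {n k : ℕ}
    (Y : Matrix (Fin (n + 1 - 1)) (Fin (k+1)) F) :
    cullisDet (Lplus (n := n+1) Y) = cullisDet Y := by
  rw [cullisDet_last_zero]
  · congr 1
    ext i j
    simp [Lplus]
  · intro j
    simp [Lplus]

theorem cullisDet_Lminus {F : Type*} [Field F] {n k : ℕ} (hodd : Odd (n + 1 + (k + 1)))
    (X : Matrix (Fin (n+1)) (Fin (k+1)) F) :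
    cullisDet (Lminus X) = cullisDet X := by
  rw [← cullisDet_shift hodd X (fun j => - X (Fin.last n) j) Finset.univ, cullisDet_last_zero]
  · congr 1
    ext i j
    simp only [Lminus, Matrix.submatrix_apply, Matrix.of_apply, Finset.mem_univ, if_true, id,
      ← sub_eq_add_neg]
    rfl
  · intro j
    simp

/-- Lemma 4.8: if `T` preserves `det_{n,k}` with `n + k` odd, then
`S = L⁻ ∘ T ∘ L⁺` preserves `det_{(n-1),k}`. -/
theorem stmt8 {F : Type*} [Field F] {n k : ℕ} (hk : 1 ≤ k) (hkn : k < n)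
    (hodd : Odd (n + k))
    (T : Matrix (Fin n) (Fin k) F →ₗ[F] Matrix (Fin n) (Fin k) F)
    (hT : ∀ X, cullisDet (T X) = cullisDet X)
    (Y : Matrix (Fin (n - 1)) (Fin k) F) :
    cullisDet (Lminus (T (Lplus Y))) = cullisDet Y := by
  obtain ⟨k, rfl⟩ := Nat.exists_eq_add_of_le' hk
  obtain ⟨n, rfl⟩ := Nat.exists_eq_add_of_le' (show 1 ≤ n by omega)
  rw [cullisDet_Lminus hodd, hT, cullisDet_Lplus]
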